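/- Let X ~ N(0, I_{d×d}) be a standard Gaussian vector in ℝ^d and let F = f(X) for some f ∈ C²(ℝ^d) whose partial derivatives of order up to two have sub-exponential growth. Assume E[F] = 0 and E[F²] = σ² > 0, and let N ~ N(0, σ²). Then d_{TV}(F, N) ≤ (4/σ²) · √( Σ_{l,m=1}^d { E[ (⟨∇²_{l,·}F, ∇²_{m,·}F⟩)² ] }^{1/2} · { E[ (∇_l F · ∇_m F)² ] }^{1/2} ), where ∇_l F is the l-th partial derivative of f evaluated at X, ∇²_{l,·}F is the l-th row of the Hessian matrix of f evaluated at X, and ⟨·,·⟩ is the Euclidean inner product on ℝ^d. -/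

import Mathlib

open MeasureTheory ProbabilityTheory Real

/-- The total variation distance between two distributions:
`sup_B |P(X ∈ B) − P(Y ∈ B)|` over Borel (measurable) sets `B`. -/
noncomputable def dTV {E : Type*} [MeasurableSpace E] (μ ν : Measure E) : ℝ :=
  ⨆ B : {B : Set E // MeasurableSet B}, |(μ B.1).toReal - (ν B.1).toReal|

/-- The partial derivative `∂f/∂x_l` of `f : ℝ^d → ℝ` at `x`. -/
noncomputable def pderiv1 {d : ℕ} (f : (Fin d → ℝ) → ℝ) (l : Fin d)
    (x : Fin d → ℝ) : ℝ :=
  fderiv ℝ f x (Pi.single l 1)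

/-- The second partial derivative `∂²f/(∂x_l ∂x_m)` of `f : ℝ^d → ℝ` at `x`. -/
noncomputable def pderiv2 {d : ℕ} (f : (Fin d → ℝ) → ℝ) (l m : Fin d)
    (x : Fin d → ℝ) : ℝ :=
  fderiv ℝ (fun y => fderiv ℝ f y (Pi.single m 1)) x (Pi.single l 1)

/-!
Let `Y` be an independent copy of `X` and `X_θ = cos θ • X + sin θ • Y`. Since rotations preserve
the law of `(X, Y)`, Gaussian integration by parts shows that `E[a(X) b(X_θ)]` has derivative
`-sin θ * E⟨∇a(X), ∇b(X_θ)⟩`; integrating from `θ = 0` to `θ = π / 2` expresses `Cov(a(X), b(X))`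
through these inner products. With `a = b` this gives the Gaussian Poincaré inequality.

With `a(x) = φ(f(x)) - E[φ'(F)] f(x)` and `b = f` the inner product is
`(φ'(F) - E[φ'(F)]) ⟨∇f(X), ∇f(X_θ)⟩`, whose mean for fixed `Y` is a covariance. The Poincaré
inequality bounds the variance of `x ↦ ⟨∇f(x), ∇f(cos θ • x + sin θ • Y)⟩` by the mean over `X` of
`2 ‖∇²f(X) ∇f(X_θ)‖² + 2 ‖∇²f(X_θ) ∇f(X)‖²`, and Cauchy–Schwarz, applied after expanding the squares
and averaging over `Y`, bounds each term by the double sum of the theorem. This controls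
`E[σ² φ'(F) - F φ(F)]` by `sup |φ'|`, and Stein's method concludes: for each continuous test
function with values in `[0, 1]` Stein's equation has a solution with `|φ'| ≤ 2 / σ²`.
-/

/-- `h` is continuous and has sub-exponential growth. Allowing `A = 0` and `B = 0` in the bound does
not change the class. -/
structure ContinuousSubexp {E : Type*} [NormedAddCommGroup E] (h : E → ℝ) : Prop where
  continuous : Continuous h
  exists_bound : ∃ A B : ℝ, 0 ≤ A ∧ 0 ≤ B ∧ ∀ x, |h x| ≤ A * exp (B * ‖x‖)

namespace ContinuousSubexp

variable {E F : Type*} [NormedAddCommGroup E] [NormedAddCommGroup F] {g h : E → ℝ}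

lemma const (c : ℝ) : ContinuousSubexp (fun _ : E ↦ c) :=
  ⟨continuous_const, |c|, 0, abs_nonneg _, le_rfl, fun x ↦ by simp⟩

lemma id : ContinuousSubexp (fun x : ℝ ↦ x) := by
  refine ⟨continuous_id, 1, 1, zero_le_one, zero_le_one, fun x ↦ ?_⟩
  rw [one_mul, one_mul, norm_eq_abs]
  linarith [add_one_le_exp |x|]

lemma of_le (hg : ContinuousSubexp g) (hc : Continuous h) (hle : ∀ x, |h x| ≤ |g x|) :
    ContinuousSubexp h := by
  obtain ⟨-, A, B, hA, hB, hbound⟩ := hg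
  exact ⟨hc, A, B, hA, hB, fun x ↦ (hle x).trans (hbound x)⟩

lemma of_bounded {C : ℝ} (hc : Continuous h) (hle : ∀ x, |h x| ≤ C) : ContinuousSubexp h :=
  (const C).of_le hc fun x ↦ (hle x).trans (le_abs_self C)

lemma add (hg : ContinuousSubexp g) (hh : ContinuousSubexp h) :
    ContinuousSubexp (fun x ↦ g x + h x) := by
  obtain ⟨hgc, A, B, hA, hB, hgb⟩ := hg
  obtain ⟨hhc, A', B', hA', hB', hhb⟩ := hh
  refine ⟨hgc.add hhc, A + A', B + B', by positivity, by positivity, fun x ↦ ?_⟩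
  calc |g x + h x| ≤ |g x| + |h x| := abs_add_le _ _
    _ ≤ A * exp (B * ‖x‖) + A' * exp (B' * ‖x‖) := add_le_add (hgb x) (hhb x)
    _ ≤ A * exp ((B + B') * ‖x‖) + A' * exp ((B + B') * ‖x‖) := by gcongr <;> linarith
    _ = (A + A') * exp ((B + B') * ‖x‖) := by ring

lemma mul (hg : ContinuousSubexp g) (hh : ContinuousSubexp h) :
    ContinuousSubexp (fun x ↦ g x * h x) := by
  obtain ⟨hgc, A, B, hA, hB, hgb⟩ := hg
  obtain ⟨hhc, A', B', hA', hB', hhb⟩ := hh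
  refine ⟨hgc.mul hhc, A * A', B + B', by positivity, by positivity, fun x ↦ ?_⟩
  calc |g x * h x| = |g x| * |h x| := abs_mul _ _
    _ ≤ A * exp (B * ‖x‖) * (A' * exp (B' * ‖x‖)) :=
        mul_le_mul (hgb x) (hhb x) (abs_nonneg _) (by positivity)
    _ = A * A' * exp ((B + B') * ‖x‖) := by rw [add_mul, exp_add]; ring

lemma const_mul (hg : ContinuousSubexp g) (c : ℝ) : ContinuousSubexp (fun x ↦ c * g x) :=
  (const c).mul hg

lemma sub (hg : ContinuousSubexp g) (hh : ContinuousSubexp h) :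
    ContinuousSubexp (fun x ↦ g x - h x) := by
  simpa only [neg_one_mul, ← sub_eq_add_neg] using hg.add (hh.const_mul (-1))

lemma pow (hg : ContinuousSubexp g) (n : ℕ) : ContinuousSubexp (fun x ↦ g x ^ n) := by
  induction n with
  | zero => simpa only [pow_zero] using const 1
  | succ n ih => simpa only [pow_succ] using ih.mul hg

lemma sum {ι : Type*} (s : Finset ι) {g : ι → E → ℝ} (hg : ∀ i ∈ s, ContinuousSubexp (g i)) :
    ContinuousSubexp (fun x ↦ ∑ i ∈ s, g i x) := by
  classical
  induction s using Finset.induction_on with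
  | empty => simpa only [Finset.sum_empty] using const 0
  | insert a s ha ih =>
    simp only [Finset.sum_insert ha]
    exact (hg a (Finset.mem_insert_self a s)).add
      (ih fun i hi ↦ hg i (Finset.mem_insert_of_mem hi))

lemma lipschitz_comp {K : NNReal} {ψ : ℝ → ℝ} (hh : ContinuousSubexp h)
    (hψ : LipschitzWith K ψ) : ContinuousSubexp (fun x ↦ ψ (h x)) := by
  obtain ⟨hhc, A, B, hA, hB, hhb⟩ := hh
  refine ⟨hψ.continuous.comp hhc, |ψ 0| + K * A, B, by positivity, hB, fun x ↦ ?_⟩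
  have hlip : |ψ (h x) - ψ 0| ≤ K * |h x| := by
    simpa only [dist_eq, sub_zero] using hψ.dist_le_mul (h x) 0
  calc |ψ (h x)| ≤ |ψ 0| + |ψ (h x) - ψ 0| := by
        simpa only [add_sub_cancel] using abs_add_le (ψ 0) (ψ (h x) - ψ 0)
    _ ≤ |ψ 0| * exp (B * ‖x‖) + K * (A * exp (B * ‖x‖)) := by
        gcongr
        · exact le_mul_of_one_le_right (abs_nonneg _) (one_le_exp (by positivity))
        · exact hlip.trans (by gcongr; exact hhb x)
    _ = (|ψ 0| + K * A) * exp (B * ‖x‖) := by ring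

lemma comp_of_norm_le (hh : ContinuousSubexp h) {φ : F → E} (hφ : Continuous φ) {c c' : ℝ}
    (hle : ∀ z, ‖φ z‖ ≤ c * ‖z‖ + c') : ContinuousSubexp (fun z ↦ h (φ z)) := by
  obtain ⟨hhc, A, B, hA, hB, hhb⟩ := hh
  refine ⟨hhc.comp hφ, A * exp (B * c'), B * |c|, by positivity, by positivity, fun z ↦ ?_⟩
  calc |h (φ z)| ≤ A * exp (B * ‖φ z‖) := hhb _
    _ ≤ A * exp (B * (|c| * ‖z‖ + c')) := by
        gcongr
        exact (hle z).trans (by gcongr; exact le_abs_self c)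
    _ = A * exp (B * c') * exp (B * |c| * ‖z‖) := by
        rw [mul_assoc A, ← exp_add]; ring_nf

lemma comp_prodMk_right {h : E × F → ℝ} (hh : ContinuousSubexp h) (y : F) :
    ContinuousSubexp (fun x ↦ h (x, y)) :=
  hh.comp_of_norm_le (c := 1) (c' := ‖y‖) (by fun_prop) fun x ↦ by
    rw [one_mul, Prod.norm_mk]
    exact max_le_add_of_nonneg (norm_nonneg x) (norm_nonneg y)

variable [NormedSpace ℝ E] [NormedSpace ℝ F]

lemma comp_clm (hh : ContinuousSubexp h) (L : F →L[ℝ] E) : ContinuousSubexp (fun z ↦ h (L z)) :=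
  hh.comp_of_norm_le (c := ‖L‖) (c' := 0) L.continuous fun z ↦ by
    rw [add_zero]; exact L.le_opNorm z

lemma comp_fst (hh : ContinuousSubexp h) : ContinuousSubexp (fun z : E × F ↦ h z.1) :=
  hh.comp_clm (.fst ℝ E F)

lemma comp_snd (hh : ContinuousSubexp h) : ContinuousSubexp (fun z : F × E ↦ h z.2) :=
  hh.comp_clm (.snd ℝ F E)

lemma coord {ι : Type*} [Fintype ι] (i : ι) : ContinuousSubexp (fun x : ι → ℝ ↦ x i) :=
  id.comp_clm (ContinuousLinearMap.proj (R := ℝ) (φ := fun _ ↦ ℝ) i)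

lemma comp_prodMk_left {h : E × F → ℝ} (hh : ContinuousSubexp h) (x : E) :
    ContinuousSubexp (fun y ↦ h (x, y)) :=
  (hh.comp_clm (ContinuousLinearEquiv.prodComm ℝ F E : F × E →L[ℝ] E × F)).comp_prodMk_right x

variable [MeasurableSpace E] [BorelSpace E] [CompleteSpace E] [SecondCountableTopology E]

lemma integrable (hh : ContinuousSubexp h) (μ : Measure E) [IsGaussian μ] : Integrable h μ := by
  obtain ⟨hhc, A, B, hA, -, hhb⟩ := hh
  obtain ⟨C, hC, hint⟩ := IsGaussian.exists_integrable_exp_sq μ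
  refine (hint.const_mul (A * exp (B ^ 2 / C))).mono' hhc.aestronglyMeasurable
    (ae_of_all _ fun x ↦ (hhb x).trans ?_)
  have young : B * ‖x‖ ≤ B ^ 2 / C + C * ‖x‖ ^ 2 := by
    rw [div_add' _ _ _ hC.ne', le_div_iff₀ hC]
    nlinarith [sq_nonneg (B - C * ‖x‖), sq_nonneg (B + C * ‖x‖)]
  rw [mul_assoc, ← exp_add]
  gcongr

lemma memLp_two (hh : ContinuousSubexp h) (μ : Measure E) [IsGaussian μ] : MemLp h 2 μ :=
  (memLp_two_iff_integrable_sq hh.continuous.aestronglyMeasurable).2 ((hh.pow 2).integrable μ)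

lemma hasDerivAt_integral {H H' : ℝ × E → ℝ} (hH : ContinuousSubexp H)
    (hH' : ContinuousSubexp H') (hderiv : ∀ t x, HasDerivAt (fun s ↦ H (s, x)) (H' (t, x)) t)
    (μ : Measure E) [IsGaussian μ] (t : ℝ) :
    HasDerivAt (fun s ↦ ∫ x, H (s, x) ∂μ) (∫ x, H' (t, x) ∂μ) t := by
  obtain ⟨hcont, A, B, hA, hB, hbound⟩ := hH'
  have hdom : ContinuousSubexp (fun x : E ↦ A * exp (B * (|t| + 1 + ‖x‖))) := by
    refine ⟨by fun_prop, A * exp (B * (|t| + 1)), B, by positivity, hB, fun x ↦ ?_⟩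
    rw [abs_of_nonneg (by positivity), mul_assoc, ← exp_add, mul_add]
  refine (hasDerivAt_integral_of_dominated_loc_of_deriv_le (Metric.ball_mem_nhds t one_pos)
    (.of_forall fun s ↦ (hH.comp_prodMk_left s).continuous.aestronglyMeasurable)
    ((hH.comp_prodMk_left t).integrable μ)
    (hcont.comp (.prodMk_right t)).aestronglyMeasurable (ae_of_all _ fun x s hs ↦ ?_)
    (hdom.integrable μ) (ae_of_all _ fun x s _ ↦ hderiv s x)).2
  refine (hbound (s, x)).trans ?_
  have hs' : |s| ≤ |t| + 1 := by
    have h1 : |s - t| < 1 := hs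
    linarith [abs_sub_abs_le_abs_sub s t]
  gcongr
  rw [Prod.norm_mk, norm_eq_abs]
  exact (max_le_add_of_nonneg (abs_nonneg s) (norm_nonneg x)).trans (by gcongr)

end ContinuousSubexp

section PartialDerivatives

variable {d : ℕ} {g h : (Fin d → ℝ) → ℝ} {x : Fin d → ℝ}

lemma fderiv_apply_eq_sum_pderiv1 (h : (Fin d → ℝ) → ℝ) (x v : Fin d → ℝ) :
    fderiv ℝ h x v = ∑ i, pderiv1 h i x * v i := by
  conv_lhs => rw [pi_eq_sum_univ' v, map_sum]
  refine Finset.sum_congr rfl fun i _ ↦ ?_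
  rw [map_smul, smul_eq_mul, mul_comm]
  rfl

lemma pderiv1_mul (hg : DifferentiableAt ℝ g x) (hh : DifferentiableAt ℝ h x) (i : Fin d) :
    pderiv1 (fun x ↦ g x * h x) i x = pderiv1 g i x * h x + g x * pderiv1 h i x := by
  simp only [pderiv1, fderiv_fun_mul hg hh, add_apply,
    smul_apply, smul_eq_mul]
  ring

lemma pderiv1_sum {ι : Type*} {s : Finset ι} {g : ι → (Fin d → ℝ) → ℝ}
    (hg : ∀ j ∈ s, DifferentiableAt ℝ (g j) x) (i : Fin d) :
    pderiv1 (fun x ↦ ∑ j ∈ s, g j x) i x = ∑ j ∈ s, pderiv1 (g j) i x := by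
  simp only [pderiv1, fderiv_fun_sum hg, sum_apply]

lemma pderiv1_comp {ψ : ℝ → ℝ} (hψ : DifferentiableAt ℝ ψ (h x)) (hh : DifferentiableAt ℝ h x)
    (i : Fin d) : pderiv1 (fun x ↦ ψ (h x)) i x = deriv ψ (h x) * pderiv1 h i x := by
  have hcomp := hψ.hasDerivAt.comp_hasFDerivAt x hh.hasFDerivAt
  exact congrArg (fun L ↦ L (Pi.single i 1)) hcomp.fderiv

lemma pderiv1_comp_smul_add (c : ℝ) (y : Fin d → ℝ) (hh : DifferentiableAt ℝ h (c • x + y))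
    (i : Fin d) : pderiv1 (fun x ↦ h (c • x + y)) i x = c * pderiv1 h i (c • x + y) := by
  have hcomp := hh.hasFDerivAt.comp x (((hasFDerivAt_id x).const_smul c).add_const y)
  refine (congrArg (fun L ↦ L (Pi.single i 1)) hcomp.fderiv).trans ?_
  simp only [ContinuousLinearMap.comp_smul, ContinuousLinearMap.comp_id,
    smul_apply, smul_eq_mul]
  rfl

lemma pderiv2_comm {f : (Fin d → ℝ) → ℝ} (hf : ContDiffAt ℝ 2 f x) (l m : Fin d) :
    pderiv2 f l m x = pderiv2 f m l x := by
  have hdiff : DifferentiableAt ℝ (fderiv ℝ f) x :=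
    (hf.fderiv_right (m := 1) (by norm_num)).differentiableAt one_ne_zero
  have pderiv2_eq (l m : Fin d) : pderiv2 f l m x =
      fderiv ℝ (fderiv ℝ f) x (Pi.single l 1) (Pi.single m 1) := by
    rw [pderiv2, fderiv_clm_apply hdiff (differentiableAt_const _)]
    simp
  rw [pderiv2_eq, pderiv2_eq]
  exact hf.isSymmSndFDerivAt (by simp) _ _

end PartialDerivatives

/-- `h` is continuously differentiable, and `h` and its partial derivatives have sub-exponential
growth: the class of functions to which Gaussian integration by parts is applied. -/
structure C1Subexp {d : ℕ} (h : (Fin d → ℝ) → ℝ) : Prop where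
  contDiff : ContDiff ℝ 1 h
  subexp : ContinuousSubexp h
  subexp_pderiv1 : ∀ i, ContinuousSubexp (pderiv1 h i)

namespace C1Subexp

variable {d : ℕ} {g h : (Fin d → ℝ) → ℝ}

lemma differentiableAt (hh : C1Subexp h) (x : Fin d → ℝ) : DifferentiableAt ℝ h x :=
  hh.contDiff.differentiable one_ne_zero x

lemma mul (hg : C1Subexp g) (hh : C1Subexp h) : C1Subexp (fun x ↦ g x * h x) where
  contDiff := hg.contDiff.mul hh.contDiff
  subexp := hg.subexp.mul hh.subexp
  subexp_pderiv1 i := by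
    rw [funext fun x ↦ pderiv1_mul (hg.differentiableAt x) (hh.differentiableAt x) i]
    exact ((hg.subexp_pderiv1 i).mul hh.subexp).add (hg.subexp.mul (hh.subexp_pderiv1 i))

lemma sum {ι : Type*} {s : Finset ι} {g : ι → (Fin d → ℝ) → ℝ} (hg : ∀ j ∈ s, C1Subexp (g j)) :
    C1Subexp (fun x ↦ ∑ j ∈ s, g j x) where
  contDiff := ContDiff.sum fun j hj ↦ (hg j hj).contDiff
  subexp := .sum s fun j hj ↦ (hg j hj).subexp
  subexp_pderiv1 i := by
    rw [funext fun x ↦ pderiv1_sum (fun j hj ↦ (hg j hj).differentiableAt x) i]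
    exact .sum s fun j hj ↦ (hg j hj).subexp_pderiv1 i

lemma comp_smul_add (hh : C1Subexp h) (c : ℝ) (y : Fin d → ℝ) :
    C1Subexp (fun x ↦ h (c • x + y)) := by
  have hgrowth {k : (Fin d → ℝ) → ℝ} (hk : ContinuousSubexp k) :
      ContinuousSubexp fun x ↦ k (c • x + y) :=
    hk.comp_of_norm_le (c := ‖c‖) (c' := ‖y‖) (by fun_prop) fun x ↦
      (norm_add_le _ _).trans_eq (by rw [norm_smul])
  refine ⟨hh.contDiff.comp (by fun_prop), hgrowth hh.subexp, fun i ↦ ?_⟩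
  rw [funext fun x ↦ pderiv1_comp_smul_add (x := x) c y (hh.differentiableAt _) i]
  exact (hgrowth (hh.subexp_pderiv1 i)).const_mul c

lemma comp {ψ : ℝ → ℝ} {K : ℝ} (hψ : ContDiff ℝ 1 ψ) (hK : ∀ t, |deriv ψ t| ≤ K)
    (hh : C1Subexp h) : C1Subexp (fun x ↦ ψ (h x)) := by
  have hψd : Differentiable ℝ ψ := hψ.differentiable one_ne_zero
  have hlip : LipschitzWith K.toNNReal ψ :=
    lipschitzWith_of_nnnorm_deriv_le hψd fun t ↦ NNReal.le_toNNReal_of_coe_le (hK t)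
  refine ⟨hψ.comp hh.contDiff, hh.subexp.lipschitz_comp hlip, fun i ↦ ?_⟩
  rw [funext fun x ↦ pderiv1_comp (hψd _) (hh.differentiableAt x) i]
  refine ContinuousSubexp.mul ?_ (hh.subexp_pderiv1 i)
  exact .of_bounded ((hψ.continuous_deriv le_rfl).comp hh.contDiff.continuous) fun x ↦ hK (h x)

end C1Subexp

/-- `f` is twice continuously differentiable, and `f` and its partial derivatives of order up to two
have sub-exponential growth; second derivatives are those of `pderiv1 f l`. -/
structure C2Subexp {d : ℕ} (f : (Fin d → ℝ) → ℝ) : Prop where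
  contDiff : ContDiff ℝ 2 f
  subexp : ContinuousSubexp f
  c1Subexp_pderiv1 : ∀ l, C1Subexp (pderiv1 f l)

namespace C2Subexp

variable {d : ℕ} {f : (Fin d → ℝ) → ℝ}

lemma c1Subexp (hf : C2Subexp f) : C1Subexp f where
  contDiff := hf.contDiff.of_le one_le_two
  subexp := hf.subexp
  subexp_pderiv1 l := (hf.c1Subexp_pderiv1 l).subexp

lemma subexp_pderiv2 (hf : C2Subexp f) (l m : Fin d) : ContinuousSubexp (pderiv2 f l m) :=
  (hf.c1Subexp_pderiv1 m).subexp_pderiv1 l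

end C2Subexp

lemma sqrt_sum_sq_le_sqrt_card_mul_norm {ι : Type*} [Fintype ι] (x : ι → ℝ) :
    √(∑ i, x i ^ 2) ≤ √(Fintype.card ι) * ‖x‖ := by
  rw [← sqrt_sq (norm_nonneg x), ← sqrt_mul (Nat.cast_nonneg _)]
  refine sqrt_le_sqrt ?_
  calc ∑ i, x i ^ 2 ≤ ∑ _i : ι, ‖x‖ ^ 2 := by
        refine Finset.sum_le_sum fun i _ ↦ sq_le_sq.2 ?_
        exact (norm_le_pi_norm x i).trans (le_abs_self _)
    _ = Fintype.card ι * ‖x‖ ^ 2 := by rw [Finset.sum_const, nsmul_eq_mul, Finset.card_univ]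

lemma C2Subexp.of_exp_bound {d : ℕ} {f : (Fin d → ℝ) → ℝ} (hf : ContDiff ℝ 2 f) {A B : ℝ}
    (hA : 0 ≤ A) (hB : 0 ≤ B) (h₀ : ∀ x, |f x| ≤ A * exp (B * √(∑ i, x i ^ 2)))
    (h₁ : ∀ l x, |pderiv1 f l x| ≤ A * exp (B * √(∑ i, x i ^ 2)))
    (h₂ : ∀ l m x, |pderiv2 f l m x| ≤ A * exp (B * √(∑ i, x i ^ 2))) : C2Subexp f := by
  have hgrowth {k : (Fin d → ℝ) → ℝ} (hk : Continuous k)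
      (hle : ∀ x, |k x| ≤ A * exp (B * √(∑ i, x i ^ 2))) : ContinuousSubexp k := by
    refine ⟨hk, A, B * √d, hA, by positivity, fun x ↦ (hle x).trans ?_⟩
    rw [mul_assoc]
    gcongr
    simpa only [Fintype.card_fin] using sqrt_sum_sq_le_sqrt_card_mul_norm x
  have hf₁ (l : Fin d) : ContDiff ℝ 1 (pderiv1 f l) :=
    (hf.fderiv_right (m := 1) (by norm_num)).clm_apply contDiff_const
  have hf₂ (l m : Fin d) : Continuous (pderiv2 f l m) :=
    ((hf₁ m).continuous_fderiv one_ne_zero).clm_apply continuous_const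
  exact ⟨hf, hgrowth hf.continuous h₀, fun m ↦ ⟨hf₁ m, hgrowth (hf₁ m).continuous (h₁ m),
    fun l ↦ hgrowth (hf₂ l m) (h₂ l m)⟩⟩

section GaussianDensity

variable {m : ℝ} {v : NNReal}

lemma hasDerivAt_gaussianPDFReal (m : ℝ) (v : NNReal) (x : ℝ) :
    HasDerivAt (gaussianPDFReal m v) (-((x - m) / v) * gaussianPDFReal m v x) x := by
  have hexp : HasDerivAt (fun x ↦ -(x - m) ^ 2 / (2 * v)) (-((x - m) / v)) x :=
    ((((hasDerivAt_id x).sub_const m).pow 2).neg.div_const (2 * (v : ℝ))).congr_deriv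
      (by simp only [id]; ring)
  rw [gaussianPDFReal_def]
  exact (hexp.exp.const_mul _).congr_deriv (by ring)

lemma continuous_gaussianPDFReal (m : ℝ) (v : NNReal) : Continuous (gaussianPDFReal m v) :=
  continuous_iff_continuousAt.2 fun x ↦ (hasDerivAt_gaussianPDFReal m v x).continuousAt

lemma integrable_gaussianReal_iff (hv : v ≠ 0) {g : ℝ → ℝ} :
    Integrable g (gaussianReal m v) ↔ Integrable (fun x ↦ g x * gaussianPDFReal m v x) := by
  rw [gaussianReal_of_var_ne_zero m hv, integrable_withDensity_iff_integrable_smul'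
    (measurable_gaussianPDF m v) (ae_of_all _ fun _ ↦ gaussianPDF_lt_top)]
  simp only [toReal_gaussianPDF, smul_eq_mul, mul_comm]

lemma integrable_sub_mean_mul_gaussianPDFReal (hv : v ≠ 0) :
    Integrable (fun x ↦ (x - m) * gaussianPDFReal m v x) :=
  (integrable_gaussianReal_iff hv).1 (IsGaussian.integrable_id.sub (integrable_const m))

lemma integral_sub_mean_mul_gaussianReal {h h' : ℝ → ℝ} (hd : ∀ x, HasDerivAt h (h' x) x)
    (hh : Integrable h (gaussianReal m v)) (hh' : Integrable h' (gaussianReal m v))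
    (hxh : Integrable (fun x ↦ (x - m) * h x) (gaussianReal m v)) :
    ∫ x, (x - m) * h x ∂gaussianReal m v = v * ∫ x, h' x ∂gaussianReal m v := by
  obtain rfl | hv := eq_or_ne v 0
  · simp only [gaussianReal_zero_var, integral_dirac, sub_self, zero_mul, NNReal.coe_zero]
  rw [integrable_gaussianReal_iff hv] at hh hh' hxh
  have hparts := integral_mul_deriv_eq_deriv_mul_of_integrable (fun x _ ↦ hd x)
    (fun x _ ↦ (hasDerivAt_gaussianPDFReal m v x).const_mul (v : ℝ))
    ((hxh.const_mul (-1)).congr (ae_of_all _ fun x ↦ by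
      simp only [Pi.mul_apply]; field_simp))
    ((hh'.const_mul (v : ℝ)).congr (ae_of_all _ fun x ↦ by simp only [Pi.mul_apply]; ring))
    ((hh.const_mul (v : ℝ)).congr (ae_of_all _ fun x ↦ by simp only [Pi.mul_apply]; ring))
  rw [integral_gaussianReal_eq_integral_smul hv, integral_gaussianReal_eq_integral_smul hv]
  calc ∫ x, gaussianPDFReal m v x • ((x - m) * h x)
      = -∫ x, h x * (v * (-((x - m) / v) * gaussianPDFReal m v x)) := by
        rw [← integral_neg]
        congr 1 with x
        simp only [smul_eq_mul]
        field_simp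
    _ = ∫ x, h' x * (v * gaussianPDFReal m v x) := by rw [hparts, neg_neg]
    _ = v * ∫ x, gaussianPDFReal m v x • h' x := by
        rw [← integral_const_mul]
        congr 1 with x
        simp only [smul_eq_mul]
        ring

end GaussianDensity

/-- The standard Gaussian measure on `Fin d → ℝ`. -/
noncomputable abbrev stdGaussianPi (d : ℕ) : Measure (Fin d → ℝ) :=
  Measure.pi fun _ : Fin d ↦ gaussianReal 0 1

local notation "γ" => stdGaussianPi

section StdGaussianPi

variable {d : ℕ}

instance isGaussian_stdGaussianPi : IsGaussian (γ d) := by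
  have hmap : γ d =
      (stdGaussian (EuclideanSpace ℝ (Fin d))).map (EuclideanSpace.equiv (Fin d) ℝ) := by
    rw [← map_pi_eq_stdGaussian, Measure.map_map (by fun_prop) (by fun_prop)]
    exact Measure.map_id.symm
  rw [hmap]
  infer_instance

lemma integral_id_stdGaussianPi : (γ d)[id] = 0 := by
  ext i
  rw [eval_integral fun j ↦ (IsGaussian.integrable_id (μ := γ d)).eval j]
  have hlaw : HasLaw (fun x ↦ x i) (gaussianReal 0 1) (γ d) :=
    (measurePreserving_eval (fun _ : Fin d ↦ gaussianReal 0 1) i).hasLaw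
  exact hlaw.integral_eq.trans integral_id_gaussianReal

lemma hasDerivAt_insertNth {n : ℕ} (i : Fin (n + 1)) (y : Fin n → ℝ) (t : ℝ) :
    HasDerivAt (fun t : ℝ ↦ (i.insertNth t y : Fin (n + 1) → ℝ)) (Pi.single i 1) t := by
  rw [hasDerivAt_pi]
  intro j
  cases j using i.succAboveCases with
  | x => simpa using hasDerivAt_id' t
  | p k => simpa using hasDerivAt_const t (y k)

lemma norm_insertNth_le {n : ℕ} (i : Fin (n + 1)) (t : ℝ) (y : Fin n → ℝ) :
    ‖(i.insertNth t y : Fin (n + 1) → ℝ)‖ ≤ ‖t‖ + ‖y‖ := by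
  rw [pi_norm_le_iff_of_nonneg (by positivity)]
  intro j
  cases j using i.succAboveCases with
  | x => simp
  | p k => simpa using (norm_le_pi_norm y k).trans (le_add_of_nonneg_left (abs_nonneg t))

lemma integral_stdGaussianPi_insertNth {n : ℕ} (i : Fin (n + 1)) {g : (Fin (n + 1) → ℝ) → ℝ}
    (hg : Integrable g (γ (n + 1))) :
    ∫ x, g x ∂γ (n + 1) =
      ∫ y, ∫ t, g (i.insertNth t y) ∂gaussianReal 0 1 ∂γ n := by
  have hmp := (measurePreserving_piFinSuccAbove (fun _ : Fin (n + 1) ↦ gaussianReal 0 1) i).symm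
  rw [← hmp.integral_comp', integral_prod_symm]
  · rfl
  · exact (hmp.integrable_comp_emb (MeasurableEquiv.measurableEmbedding _)).2 hg

lemma integral_coord_mul_stdGaussianPi {h : (Fin d → ℝ) → ℝ} (hh : C1Subexp h) (i : Fin d) :
    ∫ x, x i * h x ∂γ d = ∫ x, pderiv1 h i x ∂γ d := by
  obtain _ | n := d
  · exact i.elim0
  rw [integral_stdGaussianPi_insertNth i (((ContinuousSubexp.coord i).mul hh.subexp).integrable _),
    integral_stdGaussianPi_insertNth i ((hh.subexp_pderiv1 i).integrable _)]
  congr 1 with y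
  have hsection {k : (Fin (n + 1) → ℝ) → ℝ} (hk : ContinuousSubexp k) :
      ContinuousSubexp fun t : ℝ ↦ k (i.insertNth t y) :=
    hk.comp_of_norm_le (c := 1) (c' := ‖y‖) (by fun_prop) fun t ↦ by
      simpa only [one_mul] using norm_insertNth_le i t y
  have hderiv (t : ℝ) : HasDerivAt (fun t ↦ h (i.insertNth t y))
      (pderiv1 h i (i.insertNth t y)) t :=
    (hh.differentiableAt _).hasFDerivAt.comp_hasDerivAt t (hasDerivAt_insertNth i y t)
  simpa using integral_sub_mean_mul_gaussianReal hderiv ((hsection hh.subexp).integrable _)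
    ((hsection (hh.subexp_pderiv1 i)).integrable (gaussianReal 0 1))
    (((ContinuousSubexp.id.sub (.const 0)).mul (hsection hh.subexp)).integrable _)

end StdGaussianPi

section Rotation

variable {E : Type*} [NormedAddCommGroup E] [NormedSpace ℝ E]

/-- The map `(x, y) ↦ cos θ • x + sin θ • y`, which interpolates between `x` at `θ = 0` and an
independent copy `y` at `θ = π / 2`. -/
noncomputable def rotationFst (θ : ℝ) : E × E →L[ℝ] E :=
  .fst ℝ E E ∘L .rotation θ

lemma rotationFst_apply (θ : ℝ) (z : E × E) : rotationFst θ z = cos θ • z.1 + sin θ • z.2 := rfl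

lemma rotationFst_zero (z : E × E) : rotationFst 0 z = z.1 := by simp [rotationFst_apply]

lemma rotationFst_pi_div_two (z : E × E) : rotationFst (π / 2) z = z.2 := by
  simp [rotationFst_apply]

lemma rotation_eq_rotationFst (θ : ℝ) (z : E × E) :
    ContinuousLinearMap.rotation θ z = (rotationFst θ z, rotationFst (θ + π / 2) z) := by
  simp [rotationFst_apply, ContinuousLinearMap.rotation_apply, cos_add_pi_div_two,
    sin_add_pi_div_two]

lemma rotationFst_neg_rotation (θ : ℝ) (z : E × E) :
    rotationFst (-θ) (ContinuousLinearMap.rotation θ z) = z.1 := by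
  calc rotationFst (-θ) (ContinuousLinearMap.rotation θ z)
      = (cos θ ^ 2 + sin θ ^ 2) • z.1 := by
        simp only [rotationFst_apply, ContinuousLinearMap.rotation_apply, cos_neg, sin_neg]
        module
    _ = z.1 := by rw [cos_sq_add_sin_sq, one_smul]

lemma norm_rotationFst_le (θ : ℝ) (z : E × E) : ‖rotationFst θ z‖ ≤ 2 * ‖z‖ := by
  calc ‖rotationFst θ z‖ ≤ |cos θ| * ‖z.1‖ + |sin θ| * ‖z.2‖ :=
        (norm_add_le _ _).trans_eq (by rw [norm_smul, norm_smul, norm_eq_abs, norm_eq_abs])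
    _ ≤ 1 * ‖z‖ + 1 * ‖z‖ := by
        gcongr
        exacts [abs_cos_le_one θ, norm_fst_le z, abs_sin_le_one θ, norm_snd_le z]
    _ = 2 * ‖z‖ := by ring

lemma hasDerivAt_rotationFst (z : E × E) (θ : ℝ) :
    HasDerivAt (fun θ ↦ rotationFst θ z) (rotationFst (θ + π / 2) z) θ := by
  rw [rotationFst_apply, cos_add_pi_div_two, sin_add_pi_div_two]
  exact ((hasDerivAt_cos θ).smul_const z.1).add ((hasDerivAt_sin θ).smul_const z.2)

lemma ContinuousSubexp.comp_rotationFst_add {h : E → ℝ} (hh : ContinuousSubexp h) (c : ℝ) :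
    ContinuousSubexp (fun p : ℝ × (E × E) ↦ h (rotationFst (p.1 + c) p.2)) :=
  hh.comp_of_norm_le (c := 2) (c' := 0) (by simp only [rotationFst_apply]; fun_prop) fun p ↦ by
    rw [add_zero]
    exact (norm_rotationFst_le _ _).trans (by gcongr; exact norm_snd_le p)

variable [MeasurableSpace E] [BorelSpace E] [CompleteSpace E] [SecondCountableTopology E]
  {μ : Measure E} [IsGaussian μ]

lemma measurePreserving_rotation (hμ : μ[id] = 0) (θ : ℝ) :
    MeasurePreserving (ContinuousLinearMap.rotation θ) (μ.prod μ) (μ.prod μ) :=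
  ⟨by fun_prop, IsGaussian.map_rotation_eq_self hμ θ⟩

lemma measurePreserving_rotationFst (hμ : μ[id] = 0) (θ : ℝ) :
    MeasurePreserving (rotationFst θ) (μ.prod μ) μ :=
  measurePreserving_fst.comp (measurePreserving_rotation hμ θ)

end Rotation

section CovarianceInterpolation

variable {d : ℕ}

/-- The inner product `⟨∇a(x), ∇b(y)⟩`. -/
noncomputable def gradInner (a b : (Fin d → ℝ) → ℝ) (x y : Fin d → ℝ) : ℝ :=
  ∑ i, pderiv1 a i x * pderiv1 b i y

lemma integral_rotationFst_mul_snd {a g : (Fin d → ℝ) → ℝ} (ha : C1Subexp a)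
    (hg : ContinuousSubexp g) (θ : ℝ) (i : Fin d) :
    ∫ w, a (rotationFst θ w) * (g w.1 * w.2 i) ∂(γ d).prod (γ d) =
      sin θ * ∫ w, pderiv1 a i (rotationFst θ w) * g w.1
        ∂(γ d).prod (γ d) := by
  have hleft := (ha.subexp.comp_clm (rotationFst θ)).mul
    (hg.comp_fst.mul (ContinuousSubexp.coord i).comp_snd)
  have hright := (((ha.subexp_pderiv1 i).comp_clm (rotationFst θ)).mul hg.comp_fst).const_mul
    (sin θ)
  rw [← integral_const_mul, integral_prod _ (hleft.integrable _),
    integral_prod _ (hright.integrable _)]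
  congr 1 with x
  calc ∫ y, a (rotationFst θ (x, y)) * (g x * y i) ∂γ d
      = g x * ∫ y, y i * a (sin θ • y + cos θ • x) ∂γ d := by
        rw [← integral_const_mul]
        congr 1 with y
        rw [rotationFst_apply, add_comm]
        ring
    _ = g x * ∫ y, sin θ * pderiv1 a i (sin θ • y + cos θ • x) ∂γ d := by
        rw [integral_coord_mul_stdGaussianPi (ha.comp_smul_add (sin θ) (cos θ • x))]
        simp only [pderiv1_comp_smul_add _ _ (ha.differentiableAt _)]
    _ = ∫ y, sin θ * (pderiv1 a i (rotationFst θ (x, y)) * g x) ∂γ d := by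
        rw [← integral_const_mul]
        congr 1 with y
        rw [rotationFst_apply, add_comm]
        ring

lemma integral_mul_rotationFst_add_pi_div_two {a g : (Fin d → ℝ) → ℝ} (ha : C1Subexp a)
    (hg : ContinuousSubexp g) (θ : ℝ) (i : Fin d) :
    ∫ z, a z.1 * (g (rotationFst θ z) * rotationFst (θ + π / 2) z i)
        ∂(γ d).prod (γ d) =
      -sin θ * ∫ z, pderiv1 a i z.1 * g (rotationFst θ z)
        ∂(γ d).prod (γ d) := by
  have integral_comp_rotation {k : (Fin d → ℝ) × (Fin d → ℝ) → ℝ} (hk : Continuous k) :=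
    (measurePreserving_rotation integral_id_stdGaussianPi θ).hasLaw.integral_comp
      hk.aestronglyMeasurable
  have ha_cont := ha.subexp.continuous
  have ha'_cont := (ha.subexp_pderiv1 i).continuous
  have hg_cont := hg.continuous
  have hleft := integral_comp_rotation
    (k := fun w ↦ a (rotationFst (-θ) w) * (g w.1 * w.2 i)) (by fun_prop)
  have hright := integral_comp_rotation
    (k := fun w ↦ pderiv1 a i (rotationFst (-θ) w) * g w.1) (by fun_prop)
  have hparts := integral_rotationFst_mul_snd ha hg (-θ) i
  rw [← hleft, ← hright] at hparts
  simp only [Function.comp_def, rotationFst_neg_rotation, sin_neg] at hparts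
  simpa only [rotation_eq_rotationFst] using hparts

lemma hasDerivAt_integral_mul_rotationFst {a b : (Fin d → ℝ) → ℝ} (ha : C1Subexp a)
    (hb : C1Subexp b) (θ : ℝ) :
    HasDerivAt
      (fun θ ↦ ∫ z, a z.1 * b (rotationFst θ z) ∂(γ d).prod (γ d))
      (-sin θ * ∫ z, gradInner a b z.1 (rotationFst θ z)
        ∂(γ d).prod (γ d)) θ := by
  set γ₂ := (γ d).prod (γ d)
  have ha_fst : ContinuousSubexp fun p : ℝ × (Fin d → ℝ) × (Fin d → ℝ) ↦ a p.2.1 :=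
    ha.subexp.comp_fst.comp_snd
  have hcoord (i : Fin d) := (ContinuousSubexp.coord i).comp_rotationFst_add (π / 2)
  have hb_rot := hb.subexp.comp_rotationFst_add 0
  have hb'_rot (i : Fin d) := (hb.subexp_pderiv1 i).comp_rotationFst_add 0
  simp only [add_zero] at hb_rot hb'_rot
  have hF' (i : Fin d) := ha_fst.mul ((hb'_rot i).mul (hcoord i))
  have hderiv (t : ℝ) (z : (Fin d → ℝ) × (Fin d → ℝ)) :
      HasDerivAt (fun s ↦ a z.1 * b (rotationFst s z))
        (∑ i, a z.1 * (pderiv1 b i (rotationFst t z) * rotationFst (t + π / 2) z i)) t := by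
    rw [← Finset.mul_sum, ← fderiv_apply_eq_sum_pderiv1]
    exact ((hb.differentiableAt _).hasFDerivAt.comp_hasDerivAt t
      (hasDerivAt_rotationFst z t)).const_mul (a z.1)
  refine (ContinuousSubexp.hasDerivAt_integral (ha_fst.mul hb_rot) (.sum _ fun i _ ↦ hF' i)
    hderiv γ₂ θ).congr_deriv ?_
  have hint (i : Fin d) :
      Integrable (fun z ↦ pderiv1 a i z.1 * pderiv1 b i (rotationFst θ z)) γ₂ :=
    ((ha.subexp_pderiv1 i).comp_fst.mul
      ((hb.subexp_pderiv1 i).comp_clm (rotationFst θ))).integrable γ₂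
  simp only [gradInner]
  rw [integral_finsetSum _ fun i _ ↦ ((hF' i).comp_prodMk_left θ).integrable γ₂,
    integral_finsetSum _ fun i _ ↦ hint i, Finset.mul_sum]
  exact Finset.sum_congr rfl fun i _ ↦
    integral_mul_rotationFst_add_pi_div_two ha (hb.subexp_pderiv1 i) θ i

lemma abs_sub_le_of_hasDerivAt_neg_sin_mul {ψ D : ℝ → ℝ} {K : ℝ}
    (hψ : ∀ θ, HasDerivAt ψ (-sin θ * D θ) θ) (hD : ∀ θ, |D θ| ≤ K) :
    |ψ (π / 2) - ψ 0| ≤ K := by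
  have hB (θ : ℝ) : HasDerivAt (fun θ ↦ K * (1 - cos θ)) (K * sin θ) θ :=
    (((hasDerivAt_cos θ).const_sub 1).const_mul K).congr_deriv (by rw [neg_neg])
  have hbound := image_norm_le_of_norm_deriv_right_le_deriv_boundary
    (f := fun θ ↦ ψ θ - ψ 0) (a := 0) (b := π / 2)
    (fun θ _ ↦ ((hψ θ).sub_const _).continuousAt.continuousWithinAt)
    (fun θ _ ↦ ((hψ θ).sub_const _).hasDerivWithinAt) (by simp) hB (fun θ hθ ↦ by
      have hsin : 0 ≤ sin θ := sin_nonneg_of_nonneg_of_le_pi hθ.1 (by linarith [hθ.2, pi_pos])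
      rw [norm_eq_abs, abs_mul, abs_neg, abs_of_nonneg hsin, mul_comm]
      exact mul_le_mul_of_nonneg_right (hD θ) hsin)
    (Set.right_mem_Icc.2 (by positivity))
  simpa using hbound

lemma abs_covariance_le_of_rotationFst {a b : (Fin d → ℝ) → ℝ} (ha : C1Subexp a)
    (hb : C1Subexp b) {K : ℝ}
    (hK : ∀ θ, |∫ z, gradInner a b z.1 (rotationFst θ z)
      ∂(γ d).prod (γ d)| ≤ K) :
    |cov[a, b; γ d]| ≤ K := by
  have hinterp := abs_sub_le_of_hasDerivAt_neg_sin_mul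
    (hasDerivAt_integral_mul_rotationFst ha hb) hK
  simp only [rotationFst_zero, rotationFst_pi_div_two] at hinterp
  rw [integral_prod_mul, integral_fun_fst (fun x ↦ a x * b x), probReal_univ, one_smul,
    abs_sub_comm] at hinterp
  rwa [covariance_eq_sub (ha.subexp.memLp_two _) (hb.subexp.memLp_two _)]

lemma abs_gradInner_le (a b : (Fin d → ℝ) → ℝ) (x y : Fin d → ℝ) :
    |gradInner a b x y| ≤ (gradInner a a x x + gradInner b b y y) / 2 := by
  simp only [gradInner]
  rw [← Finset.sum_add_distrib, Finset.sum_div]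
  refine (Finset.abs_sum_le_sum_abs _ _).trans (Finset.sum_le_sum fun i _ ↦ ?_)
  rw [abs_le]
  constructor <;>
    nlinarith [sq_nonneg (pderiv1 a i x - pderiv1 b i y), sq_nonneg (pderiv1 a i x + pderiv1 b i y)]

lemma variance_le_integral_gradInner {G : (Fin d → ℝ) → ℝ} (hG : C1Subexp G) :
    Var[G; γ d] ≤ ∫ x, gradInner G G x x ∂γ d := by
  have hgrad : ContinuousSubexp fun x ↦ gradInner G G x x :=
    .sum _ fun i _ ↦ (hG.subexp_pderiv1 i).mul (hG.subexp_pderiv1 i)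
  rw [← covariance_self hG.contDiff.continuous.aemeasurable]
  refine (le_abs_self _).trans (abs_covariance_le_of_rotationFst hG hG fun θ ↦ ?_)
  have hfst_subexp := hgrad.comp_fst (F := Fin d → ℝ)
  have hrot_subexp := hgrad.comp_clm (rotationFst θ)
  have hfst := (measurePreserving_fst (μ := γ d) (ν := γ d)).hasLaw.integral_comp
    hgrad.continuous.aestronglyMeasurable
  have hrot := (measurePreserving_rotationFst (μ := γ d) integral_id_stdGaussianPi θ).hasLaw
    |>.integral_comp hgrad.continuous.aestronglyMeasurable
  simp only [Function.comp_def] at hfst hrot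
  calc |∫ z, gradInner G G z.1 (rotationFst θ z) ∂(γ d).prod (γ d)|
      ≤ ∫ z, (gradInner G G z.1 z.1 + gradInner G G (rotationFst θ z) (rotationFst θ z)) / 2
          ∂(γ d).prod (γ d) :=
        norm_integral_le_of_norm_le (f := fun z ↦ gradInner G G z.1 (rotationFst θ z))
          (((hfst_subexp.add hrot_subexp).integrable ((γ d).prod (γ d))).div_const 2)
          (ae_of_all _ fun z ↦ abs_gradInner_le G G _ _)
    _ = ∫ x, gradInner G G x x ∂γ d := by
        rw [integral_div, integral_add (hfst_subexp.integrable _) (hrot_subexp.integrable _),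
          hfst, hrot, add_self_div_two]

end CovarianceInterpolation

section CauchySchwarz

variable {Ω : Type*} [MeasurableSpace Ω] {μ : Measure Ω} {X Y : Ω → ℝ}

lemma abs_integral_mul_le_sqrt_mul_sqrt (hX : MemLp X 2 μ) (hY : MemLp Y 2 μ) :
    |∫ ω, X ω * Y ω ∂μ| ≤ √(∫ ω, X ω ^ 2 ∂μ) * √(∫ ω, Y ω ^ 2 ∂μ) := by
  have hholder := integral_mul_norm_le_Lp_mul_Lq HolderConjugate.two_two
    (by rwa [ENNReal.ofReal_ofNat] : MemLp X (.ofReal 2) μ)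
    (by rwa [ENNReal.ofReal_ofNat] : MemLp Y (.ofReal 2) μ)
  simp only [norm_eq_abs, rpow_two, sq_abs, ← sqrt_eq_rpow] at hholder
  refine (abs_integral_le_integral_abs).trans ?_
  simpa only [abs_mul] using hholder

lemma abs_covariance_le_sqrt_variance_mul_sqrt_variance [IsFiniteMeasure μ] (hX : MemLp X 2 μ)
    (hY : MemLp Y 2 μ) : |cov[X, Y; μ]| ≤ √Var[X; μ] * √Var[Y; μ] := by
  rw [covariance, variance_eq_integral hX.aemeasurable, variance_eq_integral hY.aemeasurable]
  exact abs_integral_mul_le_sqrt_mul_sqrt (hX.sub (memLp_const _)) (hY.sub (memLp_const _))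

lemma abs_covariance_le_mul_sqrt_variance [IsProbabilityMeasure μ] {K : ℝ}
    (hX : AEMeasurable X μ) (hK : ∀ ω, |X ω| ≤ K) (hY : MemLp Y 2 μ) :
    |cov[X, Y; μ]| ≤ K * √Var[Y; μ] := by
  obtain ⟨ω⟩ := μ.nonempty_of_neZero
  have hK₀ : 0 ≤ K := (abs_nonneg _).trans (hK ω)
  have hX₂ : MemLp X 2 μ := .of_bound hX.aestronglyMeasurable K (ae_of_all _ hK)
  have hvar : Var[X; μ] ≤ K ^ 2 :=
    (variance_le_sq_of_bounded (ae_of_all _ fun ω ↦ abs_le.1 (hK ω)) hX).trans_eq (by ring)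
  calc |cov[X, Y; μ]| ≤ √Var[X; μ] * √Var[Y; μ] :=
        abs_covariance_le_sqrt_variance_mul_sqrt_variance hX₂ hY
    _ ≤ K * √Var[Y; μ] := by
        gcongr
        exact sqrt_le_iff.2 ⟨hK₀, hvar⟩

lemma integral_sub_mean_mul_eq_covariance [IsProbabilityMeasure μ] (hX : MemLp X 2 μ)
    (hY : MemLp Y 2 μ) : ∫ ω, (X ω - μ[X]) * Y ω ∂μ = cov[X, Y; μ] := by
  have hXY : Integrable (fun ω ↦ X ω * Y ω) μ := hX.integrable_mul hY
  rw [covariance_eq_sub hX hY]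
  simp only [sub_mul]
  rw [integral_sub hXY ((hY.integrable one_le_two).const_mul _), integral_const_mul]
  rfl

lemma integrable_sqrt [IsFiniteMeasure μ] (hX : Integrable X μ) :
    Integrable (fun ω ↦ √(X ω)) μ := by
  refine (hX.abs.add (integrable_const 1)).mono'
    (continuous_sqrt.comp_aestronglyMeasurable hX.aestronglyMeasurable) (ae_of_all _ fun ω ↦ ?_)
  rw [norm_of_nonneg (sqrt_nonneg _), Pi.add_apply, sqrt_le_iff]
  exact ⟨by positivity, by nlinarith [abs_nonneg (X ω), le_abs_self (X ω)]⟩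

lemma integral_sqrt_le_sqrt_integral [IsProbabilityMeasure μ] (hX : Integrable X μ)
    (hX₀ : 0 ≤ X) : ∫ ω, √(X ω) ∂μ ≤ √(∫ ω, X ω ∂μ) :=
  strictConcaveOn_sqrt.concaveOn.le_map_integral continuous_sqrt.continuousOn isClosed_Ici
    (ae_of_all _ hX₀) hX (integrable_sqrt hX)

variable {Ω' : Type*} [MeasurableSpace Ω'] {ν : Measure Ω'}

lemma abs_integral_prod_sub_mean_mul_le [IsProbabilityMeasure μ] [IsProbabilityMeasure ν]
    {G q : Ω × Ω' → ℝ} {K : ℝ} (hX : AEMeasurable X μ) (hK : ∀ ω, |X ω| ≤ K)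
    (hG : Integrable G (μ.prod ν)) (hG₂ : ∀ y, MemLp (fun x ↦ G (x, y)) 2 μ)
    (hq : Integrable q (μ.prod ν))
    (hvar : ∀ y, Var[fun x ↦ G (x, y); μ] ≤ ∫ x, q (x, y) ∂μ) :
    |∫ z, (X z.1 - μ[X]) * G z ∂μ.prod ν| ≤ K * √(∫ z, q z ∂μ.prod ν) := by
  obtain ⟨ω⟩ := μ.nonempty_of_neZero
  have hK₀ : 0 ≤ K := (abs_nonneg _).trans (hK ω)
  have hX₂ : MemLp X 2 μ := .of_bound hX.aestronglyMeasurable K (ae_of_all _ hK)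
  have hXG : Integrable (fun z ↦ (X z.1 - μ[X]) * G z) (μ.prod ν) := by
    refine hG.bdd_mul (c := K + |μ[X]|) (hX.aestronglyMeasurable.comp_fst.sub
      aestronglyMeasurable_const) (ae_of_all _ fun z ↦ ?_)
    exact (norm_sub_le _ _).trans (add_le_add_left (hK z.1) _)
  have hvar₀ (y : Ω') : 0 ≤ ∫ x, q (x, y) ∂μ := (variance_nonneg _ _).trans (hvar y)
  have hq' : Integrable (fun y ↦ ∫ x, q (x, y) ∂μ) ν := hq.integral_prod_right
  rw [integral_prod_symm _ hXG, integral_prod_symm _ hq]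
  calc |∫ y, ∫ x, (X x - μ[X]) * G (x, y) ∂μ ∂ν| ≤ ∫ y, K * √(∫ x, q (x, y) ∂μ) ∂ν := by
        refine norm_integral_le_of_norm_le (f := fun y ↦ ∫ x, (X x - μ[X]) * G (x, y) ∂μ)
          ((integrable_sqrt hq').const_mul K) (ae_of_all _ fun y ↦ ?_)
        rw [norm_eq_abs, integral_sub_mean_mul_eq_covariance hX₂ (hG₂ y)]
        refine (abs_covariance_le_mul_sqrt_variance hX hK (hG₂ y)).trans ?_
        gcongr
        exact hvar y
    _ ≤ K * √(∫ y, ∫ x, q (x, y) ∂μ ∂ν) := by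
        rw [integral_const_mul]
        gcongr
        exact integral_sqrt_le_sqrt_integral hq' hvar₀

end CauchySchwarz

section SecondOrder

lemma abs_integral_comp_mul_comp_le {Ω E F : Type*} [MeasurableSpace Ω] [MeasurableSpace E]
    [MeasurableSpace F] {ρ : Measure Ω} {μ : Measure E} {ν : Measure F} {p : Ω → E} {q : Ω → F}
    (hp : MeasurePreserving p ρ μ) (hq : MeasurePreserving q ρ ν) {g : E → ℝ} {h : F → ℝ}
    (hg : MemLp g 2 μ) (hh : MemLp h 2 ν) :
    |∫ ω, g (p ω) * h (q ω) ∂ρ| ≤ √(∫ x, g x ^ 2 ∂μ) * √(∫ y, h y ^ 2 ∂ν) := by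
  have hg₂ : ∫ ω, g (p ω) ^ 2 ∂ρ = ∫ x, g x ^ 2 ∂μ :=
    hp.hasLaw.integral_comp (hg.aestronglyMeasurable.pow 2)
  have hh₂ : ∫ ω, h (q ω) ^ 2 ∂ρ = ∫ y, h y ^ 2 ∂ν :=
    hq.hasLaw.integral_comp (hh.aestronglyMeasurable.pow 2)
  rw [← hg₂, ← hh₂]
  exact abs_integral_mul_le_sqrt_mul_sqrt (hg.comp_measurePreserving hp)
    (hh.comp_measurePreserving hq)

variable {d : ℕ} {f : (Fin d → ℝ) → ℝ}

/-- The squared Euclidean norm `‖∇²f(x) ∇f(y)‖²`. -/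
noncomputable def sqNormHessMulGrad (f : (Fin d → ℝ) → ℝ) (x y : Fin d → ℝ) : ℝ :=
  ∑ j, (∑ l, pderiv2 f j l x * pderiv1 f l y) ^ 2

/-- The quantity under the root in the second order Poincaré inequality: the sum over `l`, `m` of
`E[⟨∇²_{l,·}F, ∇²_{m,·}F⟩²]^{1/2} * E[(∇_l F * ∇_m F)²]^{1/2}`. -/
noncomputable def hessGradSum (f : (Fin d → ℝ) → ℝ) : ℝ :=
  ∑ l, ∑ m, ((∫ x, (∑ s, pderiv2 f l s x * pderiv2 f m s x) ^ 2 ∂γ d) ^ ((1 : ℝ) / 2)) *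
    ((∫ x, (pderiv1 f l x * pderiv1 f m x) ^ 2 ∂γ d) ^ ((1 : ℝ) / 2))

lemma sqNormHessMulGrad_eq_sum (hf : ContDiff ℝ 2 f) (x y : Fin d → ℝ) :
    sqNormHessMulGrad f x y =
      ∑ l, ∑ m, (∑ s, pderiv2 f l s x * pderiv2 f m s x) * (pderiv1 f l y * pderiv1 f m y) := by
  simp_rw [sqNormHessMulGrad, sq, Finset.sum_mul_sum, Finset.sum_mul]
  rw [Finset.sum_comm]
  refine Finset.sum_congr rfl fun l _ ↦ ?_
  rw [Finset.sum_comm]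
  refine Finset.sum_congr rfl fun m _ ↦ Finset.sum_congr rfl fun j _ ↦ ?_
  rw [pderiv2_comm hf.contDiffAt j l, pderiv2_comm hf.contDiffAt j m]
  ring

variable {E : Type*} [NormedAddCommGroup E] [NormedSpace ℝ E] {p q : E →L[ℝ] (Fin d → ℝ)}

lemma C2Subexp.subexp_sqNormHessMulGrad_comp (hf : C2Subexp f) (p q : E →L[ℝ] (Fin d → ℝ)) :
    ContinuousSubexp fun z ↦ sqNormHessMulGrad f (p z) (q z) :=
  .sum _ fun j _ ↦ ContinuousSubexp.pow (.sum _ fun l _ ↦ ((hf.subexp_pderiv2 j l).comp_clm p).mul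
    ((hf.c1Subexp.subexp_pderiv1 l).comp_clm q)) 2

lemma C2Subexp.integral_sqNormHessMulGrad_comp_le [MeasurableSpace E] [BorelSpace E]
    [CompleteSpace E] [SecondCountableTopology E] {ρ : Measure E} [IsGaussian ρ]
    (hf : C2Subexp f) (hp : MeasurePreserving p ρ (γ d)) (hq : MeasurePreserving q ρ (γ d)) :
    ∫ z, sqNormHessMulGrad f (p z) (q z) ∂ρ ≤ hessGradSum f := by
  have hhess (l m : Fin d) :
      ContinuousSubexp fun x ↦ ∑ s, pderiv2 f l s x * pderiv2 f m s x :=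
    .sum _ fun s _ ↦ (hf.subexp_pderiv2 l s).mul (hf.subexp_pderiv2 m s)
  have hgrad (l m : Fin d) : ContinuousSubexp fun x ↦ pderiv1 f l x * pderiv1 f m x :=
    (hf.c1Subexp.subexp_pderiv1 l).mul (hf.c1Subexp.subexp_pderiv1 m)
  have hint (l m : Fin d) : Integrable (fun z ↦
      (∑ s, pderiv2 f l s (p z) * pderiv2 f m s (p z)) *
        (pderiv1 f l (q z) * pderiv1 f m (q z))) ρ :=
    (((hhess l m).comp_clm p).mul ((hgrad l m).comp_clm q)).integrable ρ
  simp only [sqNormHessMulGrad_eq_sum hf.contDiff, hessGradSum, ← sqrt_eq_rpow]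
  rw [integral_finsetSum _ fun l _ ↦ integrable_finsetSum _ fun m _ ↦ hint l m]
  refine Finset.sum_le_sum fun l _ ↦ ?_
  rw [integral_finsetSum _ fun m _ ↦ hint l m]
  exact Finset.sum_le_sum fun m _ ↦ (le_abs_self _).trans <|
    abs_integral_comp_mul_comp_le hp hq ((hhess l m).memLp_two _) ((hgrad l m).memLp_two _)

lemma C2Subexp.c1Subexp_gradInner_rotationFst (hf : C2Subexp f) (θ : ℝ) (y : Fin d → ℝ) :
    C1Subexp fun x ↦ gradInner f f x (rotationFst θ (x, y)) :=
  .sum fun l _ ↦ (hf.c1Subexp_pderiv1 l).mul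
    ((hf.c1Subexp_pderiv1 l).comp_smul_add (cos θ) (sin θ • y))

lemma C2Subexp.pderiv1_gradInner_rotationFst (hf : C2Subexp f) (θ : ℝ) (x y : Fin d → ℝ)
    (j : Fin d) :
    pderiv1 (fun x ↦ gradInner f f x (rotationFst θ (x, y))) j x =
      ∑ l, pderiv2 f j l x * pderiv1 f l (rotationFst θ (x, y)) +
        cos θ * ∑ l, pderiv2 f j l (rotationFst θ (x, y)) * pderiv1 f l x := by
  have hrot (l : Fin d) := (hf.c1Subexp_pderiv1 l).comp_smul_add (cos θ) (sin θ • y)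
  simp only [gradInner, rotationFst_apply]
  rw [pderiv1_sum fun l _ ↦ ((hf.c1Subexp_pderiv1 l).mul (hrot l)).differentiableAt x,
    Finset.mul_sum, ← Finset.sum_add_distrib]
  refine Finset.sum_congr rfl fun l _ ↦ ?_
  rw [pderiv1_mul ((hf.c1Subexp_pderiv1 l).differentiableAt x) ((hrot l).differentiableAt x),
    pderiv1_comp_smul_add _ _ ((hf.c1Subexp_pderiv1 l).differentiableAt _), mul_left_comm,
    mul_comm (pderiv1 f l x)]
  rfl

lemma C2Subexp.gradInner_self_gradInner_rotationFst_le (hf : C2Subexp f) (θ : ℝ)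
    (x y : Fin d → ℝ) :
    gradInner (fun x ↦ gradInner f f x (rotationFst θ (x, y)))
        (fun x ↦ gradInner f f x (rotationFst θ (x, y))) x x ≤
      2 * (sqNormHessMulGrad f x (rotationFst θ (x, y)) +
        sqNormHessMulGrad f (rotationFst θ (x, y)) x) := by
  rw [gradInner, sqNormHessMulGrad, sqNormHessMulGrad, ← Finset.sum_add_distrib, Finset.mul_sum]
  refine Finset.sum_le_sum fun j _ ↦ ?_
  rw [hf.pderiv1_gradInner_rotationFst, ← sq]
  refine add_sq_le.trans ?_
  rw [mul_pow]
  gcongr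
  exact mul_le_of_le_one_left (sq_nonneg _) (cos_sq_le_one θ)

lemma C2Subexp.variance_gradInner_rotationFst_le (hf : C2Subexp f) (θ : ℝ) (y : Fin d → ℝ) :
    Var[fun x ↦ gradInner f f x (rotationFst θ (x, y)); γ d] ≤
      ∫ x, 2 * (sqNormHessMulGrad f x (rotationFst θ (x, y)) +
        sqNormHessMulGrad f (rotationFst θ (x, y)) x) ∂γ d := by
  have hG := hf.c1Subexp_gradInner_rotationFst θ y
  have hgrad := ContinuousSubexp.sum Finset.univ fun i _ ↦
    (hG.subexp_pderiv1 i).mul (hG.subexp_pderiv1 i)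
  have hfst := hf.subexp_sqNormHessMulGrad_comp (.fst ℝ _ _) (rotationFst θ)
  have hrot := hf.subexp_sqNormHessMulGrad_comp (rotationFst θ) (.fst ℝ _ _)
  exact (variance_le_integral_gradInner hG).trans <| integral_mono (hgrad.integrable _)
    ((((hfst.add hrot).const_mul 2).comp_prodMk_right y).integrable _)
    fun x ↦ hf.gradInner_self_gradInner_rotationFst_le θ x y

lemma C2Subexp.integral_sqNormHessMulGrad_add_le (hf : C2Subexp f) (θ : ℝ) :
    ∫ z, 2 * (sqNormHessMulGrad f z.1 (rotationFst θ z) + sqNormHessMulGrad f (rotationFst θ z) z.1)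
      ∂(γ d).prod (γ d) ≤ 2 ^ 2 * hessGradSum f := by
  have hp : MeasurePreserving (ContinuousLinearMap.fst ℝ (Fin d → ℝ) (Fin d → ℝ))
    ((γ d).prod (γ d)) (γ d) := measurePreserving_fst
  have hq := measurePreserving_rotationFst (μ := γ d) integral_id_stdGaussianPi θ
  have hfst := hf.subexp_sqNormHessMulGrad_comp (.fst ℝ _ _) (rotationFst θ)
  have hrot := hf.subexp_sqNormHessMulGrad_comp (rotationFst θ) (.fst ℝ _ _)
  have hfst_le := hf.integral_sqNormHessMulGrad_comp_le hp hq
  have hrot_le := hf.integral_sqNormHessMulGrad_comp_le hq hp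
  simp only [ContinuousLinearMap.coe_fst'] at hfst hrot hfst_le hrot_le
  rw [integral_const_mul, integral_add (hfst.integrable _) (hrot.integrable _)]
  linarith

lemma C2Subexp.abs_integral_sub_mean_mul_gradInner_le (hf : C2Subexp f) {X : (Fin d → ℝ) → ℝ}
    {K : ℝ} (hX : AEMeasurable X (γ d)) (hK : ∀ x, |X x| ≤ K) (θ : ℝ) :
    |∫ z, (X z.1 - (γ d)[X]) * gradInner f f z.1 (rotationFst θ z) ∂(γ d).prod (γ d)| ≤
      K * (2 * √(hessGradSum f)) := by
  have hK₀ : 0 ≤ K := (abs_nonneg _).trans (hK 0)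
  have hG : ContinuousSubexp fun z ↦ gradInner f f z.1 (rotationFst θ z) :=
    .sum _ fun l _ ↦ (hf.c1Subexp.subexp_pderiv1 l).comp_fst.mul
      ((hf.c1Subexp.subexp_pderiv1 l).comp_clm (rotationFst θ))
  have hfst := hf.subexp_sqNormHessMulGrad_comp (.fst ℝ _ _) (rotationFst θ)
  have hrot := hf.subexp_sqNormHessMulGrad_comp (rotationFst θ) (.fst ℝ _ _)
  refine (abs_integral_prod_sub_mean_mul_le hX hK (hG.integrable _)
    (fun y ↦ (hf.c1Subexp_gradInner_rotationFst θ y).subexp.memLp_two _)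
    (((hfst.add hrot).const_mul 2).integrable _)
    (hf.variance_gradInner_rotationFst_le θ)).trans ?_
  gcongr
  refine (sqrt_le_sqrt (hf.integral_sqNormHessMulGrad_add_le θ)).trans_eq ?_
  rw [sqrt_mul (by positivity), sqrt_sq zero_le_two]

lemma gradInner_comp_left {ψ : ℝ → ℝ} {g : (Fin d → ℝ) → ℝ} {x : Fin d → ℝ}
    (hψ : DifferentiableAt ℝ ψ (f x)) (hf : DifferentiableAt ℝ f x) (y : Fin d → ℝ) :
    gradInner (fun x ↦ ψ (f x)) g x y = deriv ψ (f x) * gradInner f g x y := by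
  simp only [gradInner, Finset.mul_sum, pderiv1_comp hψ hf, mul_assoc]

lemma C2Subexp.abs_covariance_comp_sub_le (hf : C2Subexp f) {φ : ℝ → ℝ} (hφ : ContDiff ℝ 1 φ)
    {K : ℝ} (hK : ∀ t, |deriv φ t| ≤ K) :
    |cov[fun x ↦ φ (f x), f; γ d] - (∫ x, deriv φ (f x) ∂γ d) * Var[f; γ d]| ≤
      K * (2 * √(hessGradSum f)) := by
  set c := ∫ x, deriv φ (f x) ∂γ d
  have hf₂ := hf.subexp.memLp_two (γ d)
  have hderiv (t : ℝ) : HasDerivAt (fun t ↦ φ t - c * t) (deriv φ t - c) t :=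
    ((hφ.differentiable one_ne_zero t).hasDerivAt.sub
      ((hasDerivAt_id t).const_mul c)).congr_deriv (by rw [mul_one])
  have hφf := C1Subexp.comp hφ hK hf.c1Subexp
  have hψf : C1Subexp fun x ↦ φ (f x) - c * f x :=
    .comp (ψ := fun t ↦ φ t - c * t) (K := K + |c|) (by fun_prop) (fun t ↦ by
      rw [(hderiv t).deriv]
      exact (abs_sub _ _).trans (add_le_add_left (hK t) _)) hf.c1Subexp
  have hmeas : AEMeasurable (fun x ↦ deriv φ (f x)) (γ d) :=
    ((hφ.continuous_deriv le_rfl).comp hf.subexp.continuous).aemeasurable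
  have hbound := abs_covariance_le_of_rotationFst hψf hf.c1Subexp fun θ ↦ by
    simp only [gradInner_comp_left (hderiv _).differentiableAt (hf.c1Subexp.differentiableAt _),
      (hderiv _).deriv]
    exact hf.abs_integral_sub_mean_mul_gradInner_le hmeas (fun x ↦ hK (f x)) θ
  rwa [covariance_fun_sub_left (hφf.subexp.memLp_two _) (hf₂.const_mul c) hf₂,
    covariance_const_mul_left, covariance_self hf₂.aemeasurable] at hbound

lemma C2Subexp.abs_integral_variance_mul_deriv_sub_le (hf : C2Subexp f) {φ : ℝ → ℝ}
    (hφ : ContDiff ℝ 1 φ) {K : ℝ} (hK : ∀ t, |deriv φ t| ≤ K) :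
    |∫ x, (Var[f; γ d] * deriv φ (f x) - (f x - (γ d)[f]) * φ (f x)) ∂γ d| ≤
      K * (2 * √(hessGradSum f)) := by
  have hφf := C1Subexp.comp hφ hK hf.c1Subexp
  have hφ'f : ContinuousSubexp fun x ↦ deriv φ (f x) :=
    .of_bounded ((hφ.continuous_deriv le_rfl).comp hf.subexp.continuous) fun x ↦ hK (f x)
  have hcentred : ContinuousSubexp fun x ↦ (f x - (γ d)[f]) * φ (f x) :=
    (hf.subexp.sub (.const _)).mul hφf.subexp
  rw [integral_sub ((hφ'f.const_mul _).integrable _) (hcentred.integrable _), integral_const_mul,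
    integral_sub_mean_mul_eq_covariance (hf.subexp.memLp_two _) (hφf.subexp.memLp_two _),
    covariance_comm, abs_sub_comm, mul_comm]
  exact hf.abs_covariance_comp_sub_le hφ hK

end SecondOrder

section SteinEquation

variable {m : ℝ} {v : NNReal} {k : ℝ → ℝ} {C x : ℝ}

lemma hasDerivAt_neg_mul_gaussianPDFReal (hv : v ≠ 0) (x : ℝ) :
    HasDerivAt (fun x ↦ -(v * gaussianPDFReal m v x)) ((x - m) * gaussianPDFReal m v x) x :=
  ((hasDerivAt_gaussianPDFReal m v x).const_mul (v : ℝ)).neg.congr_deriv (by field_simp)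

lemma integral_Ioi_abs_sub_mean_mul_gaussianPDFReal (hv : v ≠ 0) (hx : m ≤ x) :
    ∫ t in Set.Ioi x, |t - m| * gaussianPDFReal m v t = v * gaussianPDFReal m v x := by
  have hint := (integrable_sub_mean_mul_gaussianPDFReal (m := m) hv).integrableOn (s := Set.Ioi x)
  have htendsto := tendsto_zero_of_hasDerivAt_of_integrableOn_Ioi
    (fun t _ ↦ hasDerivAt_neg_mul_gaussianPDFReal hv t) hint
    ((integrable_gaussianPDFReal m v).const_mul (v : ℝ)).neg.integrableOn
  calc ∫ t in Set.Ioi x, |t - m| * gaussianPDFReal m v t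
      = ∫ t in Set.Ioi x, (t - m) * gaussianPDFReal m v t :=
        setIntegral_congr_fun measurableSet_Ioi fun t ht ↦ by
          rw [abs_of_nonneg (sub_nonneg.2 (hx.trans (le_of_lt ht)))]
    _ = v * gaussianPDFReal m v x := by
        rw [integral_Ioi_of_hasDerivAt_of_tendsto'
          (fun t _ ↦ hasDerivAt_neg_mul_gaussianPDFReal hv t) hint htendsto, zero_sub, neg_neg]

lemma integral_Iic_abs_sub_mean_mul_gaussianPDFReal (hv : v ≠ 0) (hx : x ≤ m) :
    ∫ t in Set.Iic x, |t - m| * gaussianPDFReal m v t = v * gaussianPDFReal m v x := by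
  have hint := (integrable_sub_mean_mul_gaussianPDFReal (m := m) hv).integrableOn (s := Set.Iic x)
  have htendsto := tendsto_zero_of_hasDerivAt_of_integrableOn_Iic
    (fun t _ ↦ hasDerivAt_neg_mul_gaussianPDFReal hv t) hint
    ((integrable_gaussianPDFReal m v).const_mul (v : ℝ)).neg.integrableOn
  calc ∫ t in Set.Iic x, |t - m| * gaussianPDFReal m v t
      = ∫ t in Set.Iic x, -((t - m) * gaussianPDFReal m v t) :=
        setIntegral_congr_fun measurableSet_Iic fun t ht ↦ by
          rw [abs_of_nonpos (sub_nonpos.2 (le_trans ht hx)), neg_mul]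
    _ = v * gaussianPDFReal m v x := by
        rw [integral_neg, integral_Iic_of_hasDerivAt_of_tendsto'
          (fun t _ ↦ hasDerivAt_neg_mul_gaussianPDFReal hv t) hint htendsto, sub_zero, neg_neg]

lemma abs_mul_abs_setIntegral_mul_gaussianPDFReal_le (hv : v ≠ 0) (hC : ∀ t, |k t| ≤ C)
    {s : Set ℝ} (hs : MeasurableSet s) {r : ℝ} (hr : ∀ t ∈ s, |r| ≤ |t - m|) :
    |r| * |∫ t in s, k t * gaussianPDFReal m v t| ≤
      C * ∫ t in s, |t - m| * gaussianPDFReal m v t := by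
  have hC₀ : 0 ≤ C := (abs_nonneg _).trans (hC 0)
  have hint : Integrable (fun t ↦ |t - m| * gaussianPDFReal m v t) := by
    refine (integrable_sub_mean_mul_gaussianPDFReal (m := m) hv).abs.congr (ae_of_all _ fun t ↦ ?_)
    simp only [abs_mul, abs_of_nonneg (gaussianPDFReal_nonneg m v t)]
  rw [← abs_mul, ← integral_const_mul, ← integral_const_mul]
  refine norm_integral_le_of_norm_le (f := fun t ↦ r * (k t * gaussianPDFReal m v t))
    (hint.const_mul C).integrableOn (ae_restrict_of_forall_mem hs fun t ht ↦ ?_)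
  rw [norm_eq_abs, abs_mul, abs_mul, abs_of_nonneg (gaussianPDFReal_nonneg m v t), ← mul_assoc,
    ← mul_assoc, mul_comm |r|]
  exact mul_le_mul_of_nonneg_right (mul_le_mul (hC t) (hr t ht) (abs_nonneg r) hC₀)
    (gaussianPDFReal_nonneg m v t)

lemma integral_mul_gaussianPDFReal (hv : v ≠ 0) (k : ℝ → ℝ) :
    ∫ x, k x * gaussianPDFReal m v x = ∫ x, k x ∂gaussianReal m v := by
  simp only [integral_gaussianReal_eq_integral_smul hv, smul_eq_mul, mul_comm]

/-- The solution `φ` of Stein's equation `v φ' - (x - m) φ = k` for `N(m, v)` that is given by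
integration from `-∞`; it is bounded by a multiple of `1 / |x - m|` when `k` is bounded and
centred. -/
noncomputable def steinSolution (m : ℝ) (v : NNReal) (k : ℝ → ℝ) (x : ℝ) : ℝ :=
  (∫ t in Set.Iic x, k t * gaussianPDFReal m v t) / (v * gaussianPDFReal m v x)

lemma abs_sub_mean_mul_steinSolution_le (hv : v ≠ 0) (hk : Integrable k (gaussianReal m v))
    (hC : ∀ t, |k t| ≤ C) (hk₀ : ∫ t, k t ∂gaussianReal m v = 0) (x : ℝ) :
    |(x - m) * steinSolution m v k x| ≤ C := by
  have hkp := (integrable_gaussianReal_iff hv).1 hk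
  have hvp : 0 < v * gaussianPDFReal m v x :=
    mul_pos (NNReal.coe_pos.2 (pos_iff_ne_zero.2 hv)) (gaussianPDFReal_pos m v x hv)
  rw [steinSolution, ← mul_div_assoc, abs_div, abs_of_pos hvp, div_le_iff₀ hvp, abs_mul]
  obtain hx | hx := le_total x m
  · rw [← integral_Iic_abs_sub_mean_mul_gaussianPDFReal hv hx]
    refine abs_mul_abs_setIntegral_mul_gaussianPDFReal_le hv hC measurableSet_Iic fun t ht ↦ ?_
    rw [abs_of_nonpos (sub_nonpos.2 hx), abs_of_nonpos (sub_nonpos.2 (le_trans ht hx))]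
    linarith [Set.mem_Iic.1 ht]
  · have hsplit := intervalIntegral.integral_Iic_add_Ioi (b := x) hkp.integrableOn hkp.integrableOn
    rw [integral_mul_gaussianPDFReal hv, hk₀] at hsplit
    rw [eq_neg_of_add_eq_zero_left hsplit, abs_neg,
      ← integral_Ioi_abs_sub_mean_mul_gaussianPDFReal hv hx]
    refine abs_mul_abs_setIntegral_mul_gaussianPDFReal_le hv hC measurableSet_Ioi fun t ht ↦ ?_
    rw [abs_of_nonneg (sub_nonneg.2 hx), abs_of_nonneg (sub_nonneg.2 (hx.trans (le_of_lt ht)))]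
    linarith [Set.mem_Ioi.1 ht]

lemma hasDerivAt_setIntegral_Iic {g : ℝ → ℝ} (hg : Continuous g) (hint : Integrable g) (x : ℝ) :
    HasDerivAt (fun x ↦ ∫ t in Set.Iic x, g t) (g x) x := by
  have hsplit (y : ℝ) : ∫ t in Set.Iic y, g t =
      (∫ t in (0 : ℝ)..y, g t) + ∫ t in Set.Iic 0, g t := by
    rw [← intervalIntegral.integral_Iic_sub_Iic hint.integrableOn hint.integrableOn,
      sub_add_cancel]
  rw [funext hsplit]
  exact (hg.integral_hasStrictDerivAt 0 x).hasDerivAt.add_const _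

lemma hasDerivAt_steinSolution (hv : v ≠ 0) (hk : Continuous k)
    (hk_int : Integrable k (gaussianReal m v)) (x : ℝ) :
    HasDerivAt (steinSolution m v k) (((x - m) * steinSolution m v k x + k x) / v) x := by
  have hv' : (v : ℝ) ≠ 0 := NNReal.coe_ne_zero.2 hv
  have hp : gaussianPDFReal m v x ≠ 0 := (gaussianPDFReal_pos m v x hv).ne'
  have hnum : HasDerivAt (fun x ↦ ∫ t in Set.Iic x, k t * gaussianPDFReal m v t)
      (k x * gaussianPDFReal m v x) x :=
    hasDerivAt_setIntegral_Iic (hk.mul (continuous_gaussianPDFReal m v))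
      ((integrable_gaussianReal_iff hv).1 hk_int) x
  have hden := (hasDerivAt_gaussianPDFReal m v x).const_mul (v : ℝ)
  refine (hnum.div hden (mul_ne_zero hv' hp)).congr_deriv ?_
  rw [steinSolution]
  field_simp
  ring

lemma exists_stein_solution (hv : v ≠ 0) (hk : Continuous k) (hC : ∀ t, |k t| ≤ C)
    (hk₀ : ∫ t, k t ∂gaussianReal m v = 0) :
    ∃ φ : ℝ → ℝ, ContDiff ℝ 1 φ ∧ (∀ x, |deriv φ x| ≤ 2 * C / v) ∧
      ∀ x, v * deriv φ x - (x - m) * φ x = k x := by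
  have hk_int : Integrable k (gaussianReal m v) :=
    .of_bound hk.aestronglyMeasurable C (ae_of_all _ hC)
  have hφ := hasDerivAt_steinSolution hv hk hk_int
  have hcont : Continuous (steinSolution m v k) :=
    continuous_iff_continuousAt.2 fun x ↦ (hφ x).continuousAt
  have hderiv := funext fun x ↦ (hφ x).deriv
  refine ⟨steinSolution m v k, contDiff_one_iff_deriv.2 ⟨fun x ↦ (hφ x).differentiableAt, ?_⟩,
    fun x ↦ ?_, fun x ↦ ?_⟩
  · rw [hderiv]
    fun_prop
  · rw [hderiv, abs_div, NNReal.abs_eq]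
    gcongr
    calc |(x - m) * steinSolution m v k x + k x|
        ≤ |(x - m) * steinSolution m v k x| + |k x| := abs_add_le _ _
      _ ≤ C + C := add_le_add (abs_sub_mean_mul_steinSolution_le hv hk_int hC hk₀ x) (hC x)
      _ = 2 * C := (two_mul C).symm
  · have hv' : (v : ℝ) ≠ 0 := NNReal.coe_ne_zero.2 hv
    rw [hderiv, mul_div_cancel₀ _ hv', add_sub_cancel_left]

end SteinEquation

section TotalVariation

open Filter Topology

lemma abs_measureReal_sub_le_of_isClosed {E : Type*} [PseudoEMetricSpace E] [MeasurableSpace E]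
    [BorelSpace E] {μ ν : Measure E} [IsFiniteMeasure μ] [IsFiniteMeasure ν] {K : ℝ}
    (hK : ∀ h : E → ℝ, Continuous h → (∀ x, h x ∈ Set.Icc 0 1) →
      |∫ x, h x ∂μ - ∫ x, h x ∂ν| ≤ K) {F : Set E} (hF : IsClosed F) :
    |μ.real F - ν.real F| ≤ K := by
  have hpos (n : ℕ) : (0 : ℝ) < 1 / ((n : ℝ) + 1) := Nat.one_div_pos_of_nat
  have hμ := tendsto_integral_thickenedIndicator_of_isClosed μ hF hpos
    tendsto_one_div_add_atTop_nhds_zero_nat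
  have hν := tendsto_integral_thickenedIndicator_of_isClosed ν hF hpos
    tendsto_one_div_add_atTop_nhds_zero_nat
  exact le_of_tendsto (hμ.sub hν).abs (Eventually.of_forall fun n ↦ hK _
    (NNReal.continuous_coe.comp (thickenedIndicator (hpos n) F).continuous) fun x ↦
      ⟨NNReal.coe_nonneg _, NNReal.coe_le_one.2 (thickenedIndicator_le_one (hpos n) F x)⟩)

lemma dTV_le_of_abs_integral_sub_le {E : Type*} [PseudoEMetricSpace E] [MeasurableSpace E]
    [BorelSpace E] {μ ν : Measure E} [IsFiniteMeasure μ] [IsFiniteMeasure ν] {K : ℝ}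
    (hK : ∀ h : E → ℝ, Continuous h → (∀ x, h x ∈ Set.Icc 0 1) →
      |∫ x, h x ∂μ - ∫ x, h x ∂ν| ≤ K) : dTV μ ν ≤ K := by
  have : Nonempty {B : Set E // MeasurableSet B} := ⟨∅, .empty⟩
  refine ciSup_le fun ⟨B, hB⟩ ↦ le_of_forall_pos_le_add fun ε hε ↦ ?_
  obtain ⟨F, hFB, hF, hlt⟩ := hB.exists_isClosed_sdiff_lt (μ := μ + ν) (measure_ne_top _ _)
    (ε := ENNReal.ofReal (ε / 2)) (by simpa using hε)
  have happrox {ρ : Measure E} [IsFiniteMeasure ρ] (hρ : ρ ≤ μ + ν) :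
      |ρ.real B - ρ.real F| ≤ ε / 2 := by
    rw [← measureReal_sdiff hFB hF.measurableSet, abs_of_nonneg measureReal_nonneg]
    exact ENNReal.toReal_le_of_le_ofReal (by positivity) ((hρ (B \ F)).trans hlt.le)
  calc |μ.real B - ν.real B|
      ≤ |μ.real B - μ.real F| + |μ.real F - ν.real B| := abs_sub_le _ _ _
    _ ≤ |μ.real B - μ.real F| + (|μ.real F - ν.real F| + |ν.real F - ν.real B|) := by
        gcongr
        exact abs_sub_le _ _ _
    _ ≤ ε / 2 + (K + ε / 2) := by
        rw [abs_sub_comm (ν.real F)]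
        gcongr
        exacts [happrox (Measure.le_add_right le_rfl), abs_measureReal_sub_le_of_isClosed hK hF,
          happrox (Measure.le_add_left le_rfl)]
    _ = K + ε := by ring

lemma dTV_gaussianReal_le_of_stein {m C : ℝ} {v : NNReal} (hv : v ≠ 0) {μ : Measure ℝ}
    [IsProbabilityMeasure μ]
    (hμ : ∀ φ : ℝ → ℝ, ContDiff ℝ 1 φ → (∀ x, |deriv φ x| ≤ 2 / v) →
      |∫ x, (v * deriv φ x - (x - m) * φ x) ∂μ| ≤ C) :
    dTV μ (gaussianReal m v) ≤ C := by
  refine dTV_le_of_abs_integral_sub_le fun h hh h01 ↦ ?_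
  have hint (ρ : Measure ℝ) [IsProbabilityMeasure ρ] : Integrable h ρ :=
    .of_mem_Icc 0 1 hh.aemeasurable (ae_of_all _ h01)
  set c := ∫ x, h x ∂gaussianReal m v with hc
  have hc₀ : 0 ≤ c := integral_nonneg fun x ↦ (h01 x).1
  have hc₁ : c ≤ 1 := by
    simpa using integral_mono (hint (gaussianReal m v)) (integrable_const 1) fun x ↦ (h01 x).2
  have centred_abs_le (x : ℝ) : |h x - c| ≤ 1 :=
    abs_sub_le_of_nonneg_of_le (h01 x).1 (h01 x).2 hc₀ hc₁
  have integral_centred : ∫ x, (h x - c) ∂gaussianReal m v = 0 := by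
    rw [integral_sub (hint _) (integrable_const c), ← hc]
    simp
  obtain ⟨φ, hφ, hφ', hstein⟩ := exists_stein_solution hv (by fun_prop) centred_abs_le
    integral_centred
  have hbound := hμ φ hφ (by simpa only [mul_one] using hφ')
  simpa only [hstein, integral_sub (hint μ) (integrable_const c), integral_const, probReal_univ,
    one_smul] using hbound

end TotalVariation

theorem second_order_poincare_tv_general {d : ℕ} {f : (Fin d → ℝ) → ℝ} (hf : C2Subexp f)
    (hvar : 0 < Var[f; γ d]) :
    dTV ((γ d).map f) (gaussianReal (γ d)[f] Var[f; γ d].toNNReal) ≤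
      4 / Var[f; γ d] * √(hessGradSum f) := by
  have hmeas := hf.subexp.continuous.aemeasurable (μ := γ d)
  have : IsProbabilityMeasure ((γ d).map f) := Measure.isProbabilityMeasure_map hmeas
  refine dTV_gaussianReal_le_of_stein (toNNReal_pos.2 hvar).ne' fun φ hφ hφ' ↦ ?_
  rw [coe_toNNReal _ hvar.le] at hφ' ⊢
  have hcont : Continuous fun x ↦ Var[f; γ d] * deriv φ x - (x - (γ d)[f]) * φ x :=
    ((hφ.continuous_deriv le_rfl).const_mul _).sub ((continuous_sub_right _).mul hφ.continuous)
  rw [integral_map hmeas hcont.aestronglyMeasurable]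
  exact (hf.abs_integral_variance_mul_deriv_sub_le hφ hφ').trans_eq (by ring)

theorem second_order_poincare_tv
    (d : ℕ) (hd : 1 ≤ d) (f : (Fin d → ℝ) → ℝ) (hf : ContDiff ℝ 2 f)
    --  and its partial derivatives of order up to two have sub-exponential growth
    (hgrowth : ∃ A B : ℝ, 0 < A ∧ 0 < B ∧ ∀ x : Fin d → ℝ,
      |f x| ≤ A * Real.exp (B * Real.sqrt (∑ i, (x i) ^ 2)) ∧
      (∀ l, |pderiv1 f l x| ≤ A * Real.exp (B * Real.sqrt (∑ i, (x i) ^ 2))) ∧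
      (∀ l m, |pderiv2 f l m x| ≤ A * Real.exp (B * Real.sqrt (∑ i, (x i) ^ 2))))
    (σ2 : ℝ) (hσ2pos : 0 < σ2)
    (hmean : ∫ x, f x ∂(Measure.pi fun _ : Fin d => gaussianReal 0 1) = 0)
    (hvar : ∫ x, (f x) ^ 2 ∂(Measure.pi fun _ : Fin d => gaussianReal 0 1) = σ2) :
    dTV
      (Measure.map f (Measure.pi fun _ : Fin d => gaussianReal 0 1))
      (gaussianReal 0 σ2.toNNReal)
      ≤ (4 / σ2)
        * Real.sqrt (∑ l, ∑ m,
            ((∫ x, (∑ s, pderiv2 f l s x * pderiv2 f m s x) ^ 2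
                ∂(Measure.pi fun _ : Fin d => gaussianReal 0 1)) ^ ((1:ℝ)/2))
            * ((∫ x, (pderiv1 f l x * pderiv1 f m x) ^ 2
                ∂(Measure.pi fun _ : Fin d => gaussianReal 0 1)) ^ ((1:ℝ)/2))) := by
  obtain ⟨A, B, hA, hB, hbound⟩ := hgrowth
  have hf₂ : C2Subexp f := .of_exp_bound hf hA.le hB.le (fun x ↦ (hbound x).1)
    (fun l x ↦ (hbound x).2.1 l) fun l m x ↦ (hbound x).2.2 l m
  have hVar : Var[f; γ d] = σ2 :=
    (variance_of_integral_eq_zero hf.continuous.aemeasurable hmean).trans hvar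
  have htv := second_order_poincare_tv_general hf₂ (hVar.symm ▸ hσ2pos)
  rwa [hVar, hmean] at htv
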